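/- Let Γ be a connected k-regular graph on n vertices with exactly four distinct adjacency eigenvalues k > θ₁ > θ₂ > θ₃, and fix an odd integer ℓ ≥ 3. Then Aˡ is a linear combination of I, A, and J (the all-ones matrix) if and only if (θ₂ - θ₃)θ₁ˡ + (θ₃ - θ₁)θ₂ˡ + (θ₁ - θ₂)θ₃ˡ = 0. -/

import Mathlib

/-!
For a connected `k`-regular graph, the `k`-eigenspace of the adjacency matrix `A` is spanned by the
all-ones vector, and the eigenvectors for the other eigenvalues are orthogonal to it. As `A` is
diagonalizable, a polynomial in `A` is therefore a multiple of `J` exactly when it vanishes at every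
eigenvalue other than `k`. Applied to `p - (a + b X)`, this says that `p(A)` is a combination of
`I`, `A` and `J` exactly when the points `(θᵢ, p(θᵢ))` lie on a common line `y = a + b x`, which is
the determinantal condition on `θ₁, θ₂, θ₃`.
-/

open Matrix Module.End Polynomial

section LinearInterpolation

variable {K : Type*} [Field K]

theorem exists_eq_add_mul_two_points (f : K → K) (x y : K) :
    ∃ a b, f x = a + b * x ∧ f y = a + b * y := by
  refine ⟨f x - slope f x y * x, slope f x y, by ring, ?_⟩
  have hslope : (y - x) * slope f x y = f y - f x := sub_smul_slope f x y
  linear_combination -hslope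

theorem exists_eq_add_mul_three_points_iff (f : K → K) (x y z : K) :
    (∃ a b, f x = a + b * x ∧ f y = a + b * y ∧ f z = a + b * z) ↔
      (y - z) * f x + (z - x) * f y + (x - y) * f z = 0 := by
  constructor
  · rintro ⟨a, b, hx, hy, hz⟩
    linear_combination (y - z) * hx + (z - x) * hy + (x - y) * hz
  · intro hdet
    obtain rfl | hxy := eq_or_ne x y
    · obtain ⟨a, b, hx, hz⟩ := exists_eq_add_mul_two_points f x z
      exact ⟨a, b, hx, hx, hz⟩
    · obtain ⟨a, b, hx, hy⟩ := exists_eq_add_mul_two_points f x y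
      refine ⟨a, b, hx, hy, mul_left_cancel₀ (sub_ne_zero.mpr hxy) ?_⟩
      linear_combination hdet - (y - z) * hx - (z - x) * hy

end LinearInterpolation

section Eigenvectors

variable {n R K : Type*} [Fintype n]

theorem dotProduct_eq_zero_of_mulVec_eq_smul [CommRing R] [IsDomain R] {A : Matrix n n R}
    (hA : A.IsSymm) {μ ν : R} (hμν : μ ≠ ν) {v w : n → R} (hv : A *ᵥ v = μ • v)
    (hw : A *ᵥ w = ν • w) : v ⬝ᵥ w = 0 := by
  have hadj : (A *ᵥ v) ⬝ᵥ w = v ⬝ᵥ (A *ᵥ w) := by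
    rw [dotProduct_mulVec, ← mulVec_transpose, hA.eq]
  rw [hv, hw, smul_dotProduct, dotProduct_smul, smul_eq_mul, smul_eq_mul] at hadj
  exact (mul_eq_mul_right_iff.mp hadj).resolve_left hμν

variable [DecidableEq n]

theorem hasEigenvalue_toLin'_iff [CommRing R] {A : Matrix n n R} {μ : R} :
    HasEigenvalue (toLin' A) μ ↔ ∃ v ≠ 0, A *ᵥ v = μ • v := by
  simp only [hasEigenvalue_iff, Submodule.ne_bot_iff, mem_eigenspace_iff, toLin'_apply, and_comm]

theorem aeval_mulVec_of_mulVec_eq_smul [CommRing R] {A : Matrix n n R} {μ : R} {v : n → R}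
    (h : A *ᵥ v = μ • v) (p : R[X]) : aeval A p *ᵥ v = p.eval μ • v := by
  rw [← toLinAlgEquiv'_apply, ← aeval_algHom_apply]
  exact aeval_apply_of_mem_apply_eq_smul h

theorem iSup_eigenspace_toLin'_eq_top {𝕜 : Type*} [RCLike 𝕜] {A : Matrix n n 𝕜}
    (hA : A.IsHermitian) : ⨆ μ, eigenspace (toLin' A) μ = ⊤ := by
  let eigenbasis := hA.eigenvectorBasis.toBasis.map (WithLp.linearEquiv 2 𝕜 (n → 𝕜))
  rw [eq_top_iff, ← eigenbasis.span_eq, Submodule.span_le, Set.range_subset_iff]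
  intro j
  refine Submodule.mem_iSup_of_mem (hA.eigenvalues j : 𝕜) (mem_eigenspace_iff.mpr ?_)
  simpa [eigenbasis] using hA.mulVec_eigenvectorBasis j

variable [Field K] {A : Matrix n n K} {k : K} {u : n → K}

theorem exists_aeval_eq_smul_vecMulVec_iff (hA : A.IsSymm)
    (htop : ⨆ μ, eigenspace (toLin' A) μ = ⊤) (hk : eigenspace (toLin' A) k = K ∙ u)
    (hu : u ⬝ᵥ u ≠ 0) (p : K[X]) :
    (∃ c : K, aeval A p = c • vecMulVec u u) ↔
      ∀ μ, HasEigenvalue (toLin' A) μ → μ ≠ k → p.eval μ = 0 := by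
  have hAu : A *ᵥ u = k • u := by
    rw [← toLin'_apply, ← mem_eigenspace_iff, hk]
    exact Submodule.mem_span_singleton_self u
  have hproj (v : n → K) : vecMulVec u u *ᵥ v = (u ⬝ᵥ v) • u := by
    rw [vecMulVec_mulVec, op_smul_eq_smul]
  constructor
  · rintro ⟨c, hc⟩ μ hμ hμk
    obtain ⟨v, hv0, hv⟩ := hasEigenvalue_toLin'_iff.mp hμ
    have hpv : p.eval μ • v = 0 := by
      rw [← aeval_mulVec_of_mulVec_eq_smul hv, hc, smul_mulVec, hproj,
        dotProduct_eq_zero_of_mulVec_eq_smul hA hμk.symm hAu hv, zero_smul, smul_zero]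
    exact (smul_eq_zero.mp hpv).resolve_right hv0
  · intro hp
    refine ⟨p.eval k / (u ⬝ᵥ u), toLin'.injective (LinearMap.eqLocus_eq_top.mp ?_)⟩
    rw [eq_top_iff, ← htop, iSup_le_iff]
    intro μ v hv
    have hAv : A *ᵥ v = μ • v := mem_eigenspace_iff.mp hv
    rw [LinearMap.mem_eqLocus, toLin'_apply, toLin'_apply, aeval_mulVec_of_mulVec_eq_smul hAv,
      smul_mulVec, hproj]
    obtain rfl | hμk := eq_or_ne μ k
    · obtain ⟨t, rfl⟩ := Submodule.mem_span_singleton.mp (hk ▸ hv)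
      rw [dotProduct_smul, smul_smul, smul_smul, smul_eq_mul]
      congr 1
      field_simp
    · rw [dotProduct_eq_zero_of_mulVec_eq_smul hA hμk.symm hAu hAv, zero_smul, smul_zero]
      obtain rfl | hv0 := eq_or_ne v 0
      · rw [smul_zero]
      · rw [hp μ (hasEigenvalue_toLin'_iff.mpr ⟨v, hv0, hAv⟩) hμk, zero_smul]

theorem exists_aeval_eq_smul_one_add_smul_add_smul_vecMulVec_iff (hA : A.IsSymm)
    (htop : ⨆ μ, eigenspace (toLin' A) μ = ⊤) (hk : eigenspace (toLin' A) k = K ∙ u)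
    (hu : u ⬝ᵥ u ≠ 0) (p : K[X]) :
    (∃ a b c : K, aeval A p = a • (1 : Matrix n n K) + b • A + c • vecMulVec u u) ↔
      ∃ a b, ∀ μ, HasEigenvalue (toLin' A) μ → μ ≠ k → p.eval μ = a + b * μ := by
  refine exists₂_congr fun a b ↦ ?_
  have haeval : aeval A (p - (C a + C b * X)) = aeval A p - (a • 1 + b • A) := by
    simp [Algebra.algebraMap_eq_smul_one]
  have hpoly := exists_aeval_eq_smul_vecMulVec_iff hA htop hk hu (p - (C a + C b * X))
  simpa only [haeval, sub_eq_iff_eq_add', eval_sub, eval_add, eval_mul, eval_C, eval_X,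
    add_zero] using hpoly

end Eigenvectors

section ConnectedRegularGraph

variable {V : Type*} [Fintype V] [DecidableEq V] {G : SimpleGraph V} [DecidableRel G.Adj] {k : ℕ}

theorem eigenspace_adjMatrix_eq_span_one (hreg : G.IsRegularOfDegree k) (hconn : G.Connected) :
    eigenspace (toLin' (G.adjMatrix ℝ)) k = ℝ ∙ (1 : V → ℝ) := by
  ext v
  have hlap : G.lapMatrix ℝ *ᵥ v = (k : ℝ) • v - G.adjMatrix ℝ *ᵥ v := by
    ext i
    simp [SimpleGraph.lapMatrix_mulVec_apply, hreg.degree_eq i]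
  obtain ⟨i₀⟩ := hconn.nonempty
  rw [mem_eigenspace_iff, toLin'_apply, eq_comm, ← sub_eq_zero, ← hlap,
    SimpleGraph.lapMatrix_mulVec_eq_zero_iff_forall_reachable, Submodule.mem_span_singleton]
  constructor
  · intro hv
    exact ⟨v i₀, funext fun i ↦ by simpa using hv i₀ i (hconn i₀ i)⟩
  · rintro ⟨t, rfl⟩ i j -
    rfl

theorem exists_aeval_adjMatrix_eq_smul_one_add_smul_add_smul_of_one_iff
    (hreg : G.IsRegularOfDegree k) (hconn : G.Connected) (p : ℝ[X]) :
    (∃ a b c : ℝ, aeval (G.adjMatrix ℝ) p =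
        a • (1 : Matrix V V ℝ) + b • G.adjMatrix ℝ + c • Matrix.of (fun _ _ => (1 : ℝ))) ↔
      ∃ a b, ∀ μ, HasEigenvalue (toLin' (G.adjMatrix ℝ)) μ → μ ≠ k → p.eval μ = a + b * μ := by
  have hJ : (Matrix.of fun _ _ ↦ 1 : Matrix V V ℝ) = vecMulVec 1 1 := by
    ext
    simp [vecMulVec_apply]
  have hnonempty := hconn.nonempty
  rw [hJ]
  exact exists_aeval_eq_smul_one_add_smul_add_smul_vecMulVec_iff G.isSymm_adjMatrix
    (iSup_eigenspace_toLin'_eq_top (G.isHermitian_adjMatrix ℝ))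
    (eigenspace_adjMatrix_eq_span_one hreg hconn) (by simp) p

end ConnectedRegularGraph

theorem stmt_7_general {V : Type*} [Fintype V] [DecidableEq V] (G : SimpleGraph V)
    [DecidableRel G.Adj] (k : ℕ) (hreg : G.IsRegularOfDegree k) (hconn : G.Connected)
    (θ₁ θ₂ θ₃ : ℝ) (h1 : θ₁ ≠ k) (h2 : θ₂ ≠ k) (h3 : θ₃ ≠ k)
    (hspec : {μ : ℝ | ∃ v : V → ℝ, v ≠ 0 ∧ (G.adjMatrix ℝ).mulVec v = μ • v}
      = {(k : ℝ), θ₁, θ₂, θ₃})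
    (p : ℝ[X]) :
    (∃ a b c : ℝ, aeval (G.adjMatrix ℝ) p =
        a • (1 : Matrix V V ℝ) + b • G.adjMatrix ℝ + c • Matrix.of (fun _ _ => (1 : ℝ))) ↔
    (θ₂ - θ₃) * p.eval θ₁ + (θ₃ - θ₁) * p.eval θ₂ + (θ₁ - θ₂) * p.eval θ₃ = 0 := by
  have heigen (μ : ℝ) : HasEigenvalue (toLin' (G.adjMatrix ℝ)) μ ↔
      μ = k ∨ μ = θ₁ ∨ μ = θ₂ ∨ μ = θ₃ :=
    hasEigenvalue_toLin'_iff.trans (Set.ext_iff.mp hspec μ)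
  rw [exists_aeval_adjMatrix_eq_smul_one_add_smul_add_smul_of_one_iff hreg hconn,
    ← exists_eq_add_mul_three_points_iff (fun x ↦ p.eval x)]
  refine exists₂_congr fun a b ↦ ?_
  simp [heigen, or_imp, forall_and, h1, h2, h3]

/-- For a connected `k`-regular graph with exactly four distinct adjacency eigenvalues
`k > θ₁ > θ₂ > θ₃`, and an odd `ℓ ≥ 3`: `Aˡ` is a linear combination of `I`, `A`, `J`
iff `(θ₂-θ₃)θ₁ˡ + (θ₃-θ₁)θ₂ˡ + (θ₁-θ₂)θ₃ˡ = 0`. -/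
theorem stmt_7 {V : Type*} [Fintype V] [DecidableEq V] (G : SimpleGraph V)
    [DecidableRel G.Adj] (k : ℕ)
    (hreg : G.IsRegularOfDegree k) (hconn : G.Connected)
    (θ₁ θ₂ θ₃ : ℝ) (h1 : (k : ℝ) > θ₁) (h2 : θ₁ > θ₂) (h3 : θ₂ > θ₃)
    (hspec : {μ : ℝ | ∃ v : V → ℝ, v ≠ 0 ∧ (G.adjMatrix ℝ).mulVec v = μ • v}
      = {(k : ℝ), θ₁, θ₂, θ₃})
    (ℓ : ℕ) (hodd : Odd ℓ) (hl : 3 ≤ ℓ) :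
    (∃ a b c : ℝ, (G.adjMatrix ℝ) ^ ℓ =
        a • (1 : Matrix V V ℝ) + b • G.adjMatrix ℝ + c • Matrix.of (fun _ _ => (1 : ℝ))) ↔
    (θ₂ - θ₃) * θ₁ ^ ℓ + (θ₃ - θ₁) * θ₂ ^ ℓ + (θ₁ - θ₂) * θ₃ ^ ℓ = 0 := by
  simpa using stmt_7_general G k hreg hconn θ₁ θ₂ θ₃ h1.ne (h2.trans h1).ne
    (h3.trans (h2.trans h1)).ne hspec (X ^ ℓ)
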